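/- A finite simple graph G is a proper circular-arc (PCA) graph if and only if its closed neighborhood hypergraph N[G] admits a tight arc ordering (i.e., N[G] is a tight circular-arc hypergraph). -/

import Mathlib

/-!
Call an enumeration of the vertices around a circle round if for every edge one of the two arcs
between its ends is a clique. Both properties amount to the existence of a round enumeration.

*Proper models.* The start points of the arcs of a proper model give a round enumeration: if the arc
of `u` contains the start of the arc of `v`, then so does the arc of every vertex between `u` and
`v`. Conversely, let the arc of `v` run from `v` to the end of the longest clique of consecutive
vertices starting at `v`; ties between end points are broken after subdividing the circle.

*Tight orderings.* In a round enumeration every `N[i]` is an arc, and if `N[j] ⊆ N[i]`, where the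
arc from `j` to `i` is a clique, then `N[j]` contains the start point of `N[i]`. Conversely, an arc
ordering of `N[G]` is itself round unless the vertices split into two cliques `P` and `Pᶜ`. In that
case cut the circle at a point of `P`. The non-neighbors of each `x ∈ P` then form an interval, and
tightness says that no such interval lies inside another one with both ends different. So `P` can
be sorted by both ends of these intervals simultaneously, and `P` in this order followed by `Pᶜ` in
its original order is a round enumeration.
-/

open Set

/-- The closed neighborhood of a vertex: the vertex together with its neighbors. -/
def ClosedNbhd {V : Type*} (G : SimpleGraph V) (v : V) : Set V :=
  {u | u = v ∨ G.Adj u v}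

/-- `S` is an interval (order-convex set) with respect to the order relation `r`. -/
def IsIntervalWrt {α : Type*} (r : α → α → Prop) (S : Set α) : Prop :=
  ∀ x y z, r x y → r y z → x ∈ S → z ∈ S → y ∈ S

/-- A family of hyperedges forms an interval hypergraph: some linear order on the
vertices makes every hyperedge an interval (a set of consecutive elements). -/
def IsIntervalHypergraph {α ι : Type*} (H : ι → Set α) : Prop :=
  ∃ r : α → α → Prop, IsLinearOrder α r ∧ ∀ i, IsIntervalWrt r (H i)

/-- `S ⊆ ZMod n` is an arc: a set of (at most `n`) circularly consecutive points. -/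
def IsArc (n : ℕ) (S : Set (ZMod n)) : Prop :=
  ∃ a : ZMod n, ∃ k : ℕ, k ≤ n ∧ S = {x | ∃ i : ℕ, i < k ∧ x = a + (i : ZMod n)}

/-- Arcs `A` and `B` share their start point: some point is a start point of both. -/
def SharesStart (n : ℕ) (A B : Set (ZMod n)) : Prop :=
  ∃ a, a ∈ A ∧ a - 1 ∉ A ∧ a ∈ B ∧ a - 1 ∉ B

/-- Arcs `A` and `B` share their end point: some point is an end point of both. -/
def SharesEnd (n : ℕ) (A B : Set (ZMod n)) : Prop :=
  ∃ a, a ∈ A ∧ a + 1 ∉ A ∧ a ∈ B ∧ a + 1 ∉ B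

/-- `G` is a proper interval graph: it has an intersection model consisting of
nonempty integer intervals that are pairwise incomparable under inclusion. -/
def IsProperIntervalGraph {V : Type*} (G : SimpleGraph V) : Prop :=
  ∃ l : V → Set ℤ,
    (∀ v, ∃ a b : ℤ, a ≤ b ∧ l v = Set.Icc a b) ∧
    (∀ u v, u ≠ v → ¬ l u ⊆ l v) ∧
    (∀ u v, u ≠ v → (G.Adj u v ↔ (l u ∩ l v).Nonempty))

/-- `G` is a circular-arc graph: it has an intersection model consisting of
nonempty arcs of some circle `ZMod n`. -/
def IsCAGraph {V : Type*} (G : SimpleGraph V) : Prop :=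
  ∃ n : ℕ, 0 < n ∧ ∃ l : V → Set (ZMod n),
    Function.Injective l ∧
    (∀ v, (l v).Nonempty ∧ IsArc n (l v)) ∧
    (∀ u v, u ≠ v → (G.Adj u v ↔ (l u ∩ l v).Nonempty))

/-- `G` is a proper circular-arc graph: it has an intersection model consisting of
nonempty arcs of some circle `ZMod n`, pairwise incomparable under inclusion. -/
def IsPCAGraph {V : Type*} (G : SimpleGraph V) : Prop :=
  ∃ n : ℕ, 0 < n ∧ ∃ l : V → Set (ZMod n),
    Function.Injective l ∧
    (∀ v, (l v).Nonempty ∧ IsArc n (l v)) ∧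
    (∀ u v, u ≠ v → ¬ l u ⊆ l v) ∧
    (∀ u v, u ≠ v → (G.Adj u v ↔ (l u ∩ l v).Nonempty))

/-- `G` is bipartite: the vertex set splits into two independent sets. -/
def IsBipartite {V : Type*} (G : SimpleGraph V) : Prop :=
  ∃ U : Set V, (∀ u ∈ U, ∀ v ∈ U, ¬ G.Adj u v) ∧ (∀ u ∉ U, ∀ v ∉ U, ¬ G.Adj u v)

/-- An arc ordering of the family `H` on `ZMod n`: a bijection under which the image
of every hyperedge is an arc. -/
def IsArcOrderingFam {V ι : Type*} (H : ι → Set V) (n : ℕ) (f : V ≃ ZMod n) : Prop :=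
  ∀ i, IsArc n (f '' H i)

/-- A tight arc ordering of the family `H`: whenever one hyperedge contains another
nonempty one, and the image of the larger one is not the whole circle, the two image
arcs share their start point or their end point. -/
def IsTightArcOrderingFam {V ι : Type*} (H : ι → Set V) (n : ℕ) (f : V ≃ ZMod n) : Prop :=
  IsArcOrderingFam H n f ∧
  ∀ i j, H j ⊆ H i → (H j).Nonempty → f '' H i ≠ Set.univ →
    SharesStart n (f '' H i) (f '' H j) ∨ SharesEnd n (f '' H i) (f '' H j)

section Nbhd

variable {V : Type*} {G : SimpleGraph V} {u v : V}

theorem self_mem_closedNbhd : v ∈ ClosedNbhd G v := Or.inl rfl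

theorem mem_closedNbhd_comm : u ∈ ClosedNbhd G v ↔ v ∈ ClosedNbhd G u :=
  or_congr eq_comm (G.adj_comm u v)

theorem adj_iff_mem_closedNbhd (h : u ≠ v) : G.Adj u v ↔ u ∈ ClosedNbhd G v :=
  (or_iff_right h).symm

theorem isClique_iff_mem_closedNbhd {S : Set V} :
    G.IsClique S ↔ ∀ ⦃u⦄, u ∈ S → ∀ ⦃v⦄, v ∈ S → u ∈ ClosedNbhd G v :=
  forall₄_congr fun _ _ _ _ => or_iff_not_imp_left.symm

theorem image_closedNbhd {W : Type*} (G : SimpleGraph V) (f : V ≃ W) (v : V) :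
    f '' ClosedNbhd G v = ClosedNbhd (G.comap f.symm) (f v) := by
  ext w
  rw [f.image_eq_preimage_symm]
  simp [ClosedNbhd, f.symm_apply_eq]

/-- A graph is cobipartite if its vertices can be split into two cliques, one of which may be
empty. -/
def IsCobipartite (G : SimpleGraph V) : Prop :=
  ∃ P : Set V, G.IsClique P ∧ G.IsClique Pᶜ

end Nbhd

section CircularOrder

variable {α : Type*} [CircularOrder α] {a b c d : α}

theorem sbtw_of_sbtw_of_sbtw (h₁ : sbtw a b c) (h₂ : sbtw c d a) : sbtw b c d :=
  (h₂.trans_right h₁.cyclic_right).cyclic_right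

theorem sbtw_or_sbtw_of_ne (hab : a ≠ b) (hbc : b ≠ c) (hca : c ≠ a) :
    sbtw a b c ∨ sbtw c b a := by
  by_contra! h
  simp only [sbtw_iff_not_btw, not_not] at h
  rcases h.1.antisymm h.2 with h | h | h
  exacts [hbc h.symm, hab h.symm, hca h.symm]

theorem mem_cIcc_iff_of_ne (hac : a ≠ c) : b ∈ cIcc a c ↔ b = a ∨ b = c ∨ sbtw a b c := by
  constructor
  · intro h
    by_contra! h'
    rcases sbtw_or_sbtw_of_ne h'.1.symm h'.2.1 hac.symm with hs | hs
    exacts [h'.2.2 hs, hs.not_btw h]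
  · rintro (rfl | rfl | h)
    exacts [left_mem_cIcc _ _, right_mem_cIcc _ _, h.btw]

/-- A subset of a circular order is circularly convex if any two of its points are joined inside it
along one of the two sides of the circle. On `ZMod n` these sets are the arcs. -/
def IsCircConvex (S : Set α) : Prop :=
  ∀ ⦃a⦄, a ∈ S → ∀ ⦃c⦄, c ∈ S → cIoo a c ⊆ S ∨ cIoo c a ⊆ S

theorem IsCircConvex.compl {S : Set α} (hS : IsCircConvex S) : IsCircConvex Sᶜ := by
  intro a ha c hc
  by_contra! h
  simp only [not_subset, mem_compl_iff, not_not] at h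
  obtain ⟨⟨b, hb, hbS⟩, d, hd, hdS⟩ := h
  rcases hS hbS hdS with hbd | hdb
  · exact hc (hbd (sbtw_of_sbtw_of_sbtw hb hd))
  · exact ha (hdb (sbtw_of_sbtw_of_sbtw hd hb))

/-- A graph on the points of a circular order is round if for every edge one of the two arcs between
its ends is a clique. Proper circular-arc models and tight orderings are both traded for round
enumerations of the vertices. -/
def IsRound (G : SimpleGraph α) : Prop :=
  ∀ ⦃u v⦄, G.Adj u v → G.IsClique (cIcc u v) ∨ G.IsClique (cIcc v u)

variable {G : SimpleGraph α} {i j p q u v w : α}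

theorem IsRound.isCircConvex_closedNbhd (hG : IsRound G) (i : α) :
    IsCircConvex (ClosedNbhd G i) := by
  -- If `b` and `d` separate `i` from a neighbor `c`, both arcs between `i` and `c` meet `{b, d}`.
  have key {b c d : α} (hb : b ∉ ClosedNbhd G i) (hd : d ∉ ClosedNbhd G i)
      (hi : sbtw d i b) (hc : sbtw b c d) : c ∉ ClosedNbhd G i := by
    rintro (rfl | hci)
    · exact hc.not_sbtw hi
    rcases hG hci with h | h <;> rw [isClique_iff_mem_closedNbhd] at h
    · exact hd (h (sbtw_of_sbtw_of_sbtw hc hi).btw (right_mem_cIcc c i))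
    · exact hb (h (sbtw_of_sbtw_of_sbtw hi hc).btw (left_mem_cIcc i c))
  intro a ha c hc
  by_contra! h
  simp only [not_subset] at h
  obtain ⟨⟨b, hb, hbi⟩, d, hd, hdi⟩ := h
  have hbcd : sbtw b c d := sbtw_of_sbtw_of_sbtw hb hd
  have hdab : sbtw d a b := sbtw_of_sbtw_of_sbtw hd hb
  rcases sbtw_or_sbtw_of_ne (a := d) (b := i) (c := b)
    (fun h => hdi (h ▸ self_mem_closedNbhd)) (fun h => hbi (h ▸ self_mem_closedNbhd))
    (by rintro rfl; exact sbtw_irrefl_left_right hbcd) with hi | hi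
  · exact key hbi hdi hi hbcd hc
  · exact key hdi hbi hi hdab ha

theorem IsRound.mem_closedNbhd_of_isClique (hG : IsRound G) (hpq : cIoo p q = ∅)
    (hp : p ∉ ClosedNbhd G i) (hq : q ∈ ClosedNbhd G i) (hji : G.IsClique (cIcc j i)) :
    q ∈ ClosedNbhd G j := by
  rw [isClique_iff_mem_closedNbhd] at hji
  have hgap (x : α) : ¬ sbtw p x q := fun h => hpq.subset h
  rcases hq with rfl | hqi
  · exact hji (right_mem_cIcc j q) (left_mem_cIcc j q)
  have hclique : G.IsClique (cIcc q i) := by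
    refine (hG hqi).resolve_right fun h => hp ?_
    refine isClique_iff_mem_closedNbhd.1 h ?_ (left_mem_cIcc i q)
    exact btw_iff_not_sbtw.2 fun hs => hgap i hs.cyclic_left
  have hj : j ∈ cIcc q i := by
    refine btw_iff_not_sbtw.2 fun hs => hp (hji ?_ (right_mem_cIcc j i))
    exact btw_iff_not_sbtw.2 fun hs' => hgap j (hs.cyclic_right.trans_left hs').cyclic_left
  exact isClique_iff_mem_closedNbhd.1 hclique (left_mem_cIcc q i) hj

theorem isClique_union_of_cIoo_subset {A B : Set α} (huv : G.Adj u v)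
    (hA : A ⊆ insert u (cIoo v u)) (hB : B ⊆ insert v (cIoo u v))
    (hu : cIoo u v ⊆ ClosedNbhd G u) (hv : cIoo v u ⊆ ClosedNbhd G v)
    (hAv : ∀ x ∈ A, cIoo v x ⊆ ClosedNbhd G x) (hBu : ∀ y ∈ B, cIoo y u ⊆ ClosedNbhd G y) :
    G.IsClique (A ∪ B) := by
  have hAne {x : α} (hx : x ∈ A) : v ≠ x := by
    rintro rfl
    exact (hA hx).elim huv.ne' sbtw_irrefl_left
  have hBne {y : α} (hy : y ∈ B) : u ≠ y := by
    rintro rfl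
    exact (hB hy).elim huv.ne sbtw_irrefl_left
  have hAB {x y : α} (hx : x ∈ A) (hy : y ∈ B) (hne : x ≠ y) : G.Adj x y := by
    rcases hA hx with rfl | hx'
    · exact (hB hy).elim (fun h => h ▸ huv) fun h => ((hu h).resolve_left hne.symm).symm
    rcases hB hy with rfl | hy'
    · exact (hv hx').resolve_left hne
    · exact (hBu y hy (sbtw_of_sbtw_of_sbtw hx' hy').cyclic_right).resolve_left hne
  rintro x (hx | hx) y (hy | hy) hne
  · rcases sbtw_or_sbtw_of_ne (hAne hx) hne (hAne hy).symm with h | h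
    · exact (hAv y hy h).resolve_left hne
    · exact ((hAv x hx h.cyclic_right).resolve_left hne.symm).symm
  · exact hAB hx hy hne
  · exact (hAB hy hx hne.symm).symm
  · rcases sbtw_or_sbtw_of_ne (hBne hx) hne (hBne hy).symm with h | h
    · exact ((hBu x hx h.cyclic_left).resolve_left hne.symm).symm
    · exact (hBu y hy h).resolve_left hne

theorem isCobipartite_of_cIoo_subset (hconv : ∀ i, IsCircConvex (ClosedNbhd G i))
    (huv : G.Adj u v) (hu : cIoo u v ⊆ ClosedNbhd G u) (hv : cIoo v u ⊆ ClosedNbhd G v) :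
    IsCobipartite G := by
  let I : Set α := insert u (cIoo v u)
  have hI {x : α} (hx : x ∈ I) : v ∈ ClosedNbhd G x :=
    mem_closedNbhd_comm.1 <| hx.elim (fun h => h ▸ .inr huv) fun h => hv h
  have hcompl : Iᶜ ⊆ insert v (cIoo u v) := by
    intro y hy
    by_contra! h
    simp only [I, mem_compl_iff, mem_insert_iff, not_or] at hy h
    rcases sbtw_or_sbtw_of_ne huv.ne (Ne.symm h.1) hy.1 with hs | hs
    exacts [hy.2 hs.cyclic_left, h.2 hs.cyclic_right]
  have hJ {y : α} (hy : y ∉ I) : u ∈ ClosedNbhd G y :=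
    mem_closedNbhd_comm.1 <| (hcompl hy).elim (fun h => h ▸ .inr huv.symm) fun h => hu h
  -- The neighborhood of a vertex of `I` reaches `v`, and that of any other vertex reaches `u`;
  -- sort the vertices according to the side on which this happens.
  let A : Set α := {x | cIoo v x ⊆ ClosedNbhd G x}
  let B : Set α := {y | cIoo y u ⊆ ClosedNbhd G y}
  refine ⟨I ∩ A ∪ Iᶜ ∩ B, ?_, ?_⟩
  · exact isClique_union_of_cIoo_subset huv inter_subset_left (inter_subset_left.trans hcompl)
      hu hv (fun x hx => hx.2) fun y hy => hy.2
  · have : (I ∩ A ∪ Iᶜ ∩ B)ᶜ = Iᶜ \ B ∪ I \ A := by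
      ext x
      by_cases hx : x ∈ I <;> simp [hx]
    rw [this]
    refine isClique_union_of_cIoo_subset huv.symm (sdiff_subset.trans hcompl) sdiff_subset hv hu
      (fun y hy => ?_) fun x hx => ?_
    · exact (hconv y self_mem_closedNbhd (hJ hy.1)).resolve_left hy.2
    · exact (hconv x (hI hx.1) self_mem_closedNbhd).resolve_left hx.2

theorem isClique_cIcc_of_not_isCobipartite (hconv : ∀ i, IsCircConvex (ClosedNbhd G i))
    (hG : ¬ IsCobipartite G) (hvw : G.Adj v w) (h : cIoo v w ⊆ ClosedNbhd G v) :
    G.IsClique (cIcc v w) := by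
  have hmem {y : α} (hy : y ∈ cIcc v w) : y ∈ ClosedNbhd G v := by
    rcases (mem_cIcc_iff_of_ne hvw.ne).1 hy with rfl | rfl | hy
    exacts [self_mem_closedNbhd, .inr hvw.symm, h hy]
  have key {x y : α} (hy : y ∈ cIcc v w) (hxy : sbtw v x y) : G.Adj x y := by
    by_contra hadj
    have hyv : y ≠ v := fun h => sbtw_irrefl_left_right (h ▸ hxy)
    have hx : x ∉ ClosedNbhd G y := fun hx =>
      hx.elim (fun h => sbtw_irrefl_right (h ▸ hxy)) hadj
    have hvy : cIoo v y ⊆ ClosedNbhd G v := fun z (hz : sbtw v z y) => by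
      rcases (mem_cIcc_iff_of_ne hvw.ne).1 hy with rfl | rfl | hy
      exacts [(hyv rfl).elim, h hz, h (sbtw_trans_right hz hy)]
    refine hG (isCobipartite_of_cIoo_subset hconv ((hmem hy).resolve_left hyv).symm hvy ?_)
    exact (hconv y (mem_closedNbhd_comm.1 (hmem hy)) self_mem_closedNbhd).resolve_left
      fun h => hx (h hxy)
  intro x hx y hy hne
  rcases eq_or_ne v x with rfl | hvx
  · exact ((hmem hy).resolve_left hne.symm).symm
  rcases eq_or_ne v y with rfl | hvy
  · exact (hmem hx).resolve_left hne
  rcases sbtw_or_sbtw_of_ne hvx hne hvy.symm with h | h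
  · exact key hy h
  · exact (key hx h.cyclic_right).symm

theorem isRound_of_not_isCobipartite (hconv : ∀ i, IsCircConvex (ClosedNbhd G i))
    (hG : ¬ IsCobipartite G) : IsRound G := by
  intro v w hvw
  rcases hconv v self_mem_closedNbhd (.inr hvw.symm) with h | h
  · exact .inl (isClique_cIcc_of_not_isCobipartite hconv hG hvw h)
  · have hconv' (i : αᵒᵈ) : IsCircConvex (ClosedNbhd (V := αᵒᵈ) G i) :=
      fun _ hx _ hy => (hconv i hy hx)
    exact .inr (isClique_cIcc_of_not_isCobipartite (α := αᵒᵈ) hconv' hG hvw h)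

end CircularOrder

section ZModArc

variable {n : ℕ} {a b c x : ZMod n} {k m : ℕ} {S : Set (ZMod n)}

theorem zmod_val_one_le (n : ℕ) : (1 : ZMod n).val ≤ 1 := by
  simpa only [Nat.cast_one] using (ZMod.val_natCast n 1).trans_le (Nat.mod_le 1 n)

theorem zmod_val_sub_pos (h : a ≠ b) : 0 < (b - a).val :=
  ZMod.val_pos.2 (sub_ne_zero.2 h.symm)

/-- The arc of length `k` starting at `a`. -/
def arc (a : ZMod n) (k : ℕ) : Set (ZMod n) := {x | (x - a).val < k}

@[simp]
theorem mem_arc : x ∈ arc a k ↔ (x - a).val < k := Iff.rfl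

theorem val_sub_add_le_of_arc_subset_arc (hk : 0 < k) (hm : m < n) (h : arc a k ⊆ arc b m) :
    (a - b).val + k ≤ m := by
  have ha : (a - b).val < m := h (by simpa using hk)
  by_contra! hlt
  have ht : ((m - (a - b).val : ℕ) : ZMod n).val = m - (a - b).val :=
    ZMod.val_cast_of_lt (by omega)
  have hmem : (a - b + (m - (a - b).val : ℕ)).val < m := by
    rw [← add_sub_right_comm]
    exact h (by rw [mem_arc, add_sub_cancel_left, ht]; omega)
  rw [ZMod.val_add_of_lt (by omega), ht] at hmem
  omega

variable [NeZero n]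

theorem zmod_val_sub_add_val_sub (a b c : ZMod n) :
    (b - a).val + (c - b).val = (c - a).val ∨ (b - a).val + (c - b).val = (c - a).val + n := by
  rw [← sub_add_sub_cancel' b a c]
  rcases lt_or_ge ((b - a).val + (c - b).val) n with h | h
  · exact .inl (ZMod.val_add_of_lt h).symm
  · exact .inr (ZMod.val_add_val_of_le h)

theorem val_natCast_mul_sub_natCast_mul [NeZero k] (a b : ZMod n) :
    (((k * b.val : ℕ) : ZMod (n * k)) - (k * a.val : ℕ)).val = k * (b - a).val := by
  have h := zmod_val_sub_add_val_sub 0 a b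
  rw [sub_zero, sub_zero] at h
  have hcast : ((k * b.val : ℕ) : ZMod (n * k)) = (k * a.val : ℕ) + (k * (b - a).val : ℕ) := by
    rw [← Nat.cast_add, ← mul_add]
    rcases h with h | h
    · rw [h]
    · rw [h, mul_add, Nat.cast_add, mul_comm k n, ZMod.natCast_self, add_zero]
  rw [hcast, add_sub_cancel_left, ZMod.val_cast_of_lt]
  rw [mul_comm n k]
  exact Nat.mul_lt_mul_of_pos_left (b - a).val_lt (NeZero.pos k)

theorem sbtw_iff_val_lt : sbtw a b c ↔ a.val < b.val ∧ b.val < c.val ∨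
    b.val < c.val ∧ c.val < a.val ∨ c.val < a.val ∧ a.val < b.val := by
  cases n with
  | zero => exact (NeZero.ne 0 rfl).elim
  | succ n => exact Fin.sbtw_iff

theorem sbtw_iff_val_sub_lt : sbtw a b c ↔ a ≠ b ∧ (b - a).val < (c - a).val := by
  have hab := zmod_val_sub_add_val_sub 0 a b
  have hac := zmod_val_sub_add_val_sub 0 a c
  simp only [sub_zero] at hab hac
  have hne : a ≠ b ↔ a.val ≠ b.val := (ZMod.val_injective n).ne_iff.symm
  have := (b - a).val_lt
  have := (c - a).val_lt
  have := a.val_lt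
  have := b.val_lt
  have := c.val_lt
  rw [sbtw_iff_val_lt, hne]
  omega

theorem isArc_iff_exists_eq_arc : IsArc n S ↔ ∃ a k, S = arc a k := by
  have harc (a : ZMod n) {k : ℕ} (hk : k ≤ n) :
      {x | ∃ i : ℕ, i < k ∧ x = a + (i : ZMod n)} = arc a k := by
    ext x
    constructor
    · rintro ⟨i, hi, rfl⟩
      simpa [arc, ZMod.val_cast_of_lt (hi.trans_le hk)] using hi
    · exact fun hx => ⟨(x - a).val, hx, by simp⟩
  constructor
  · rintro ⟨a, k, hk, rfl⟩
    exact ⟨a, k, harc a hk⟩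
  · rintro ⟨a, k, rfl⟩
    refine ⟨a, min k n, min_le_right k n, ?_⟩
    rw [harc a (min_le_right k n)]
    ext x
    simp [arc, ZMod.val_lt]

theorem cIcc_eq_arc (h : a ≠ b) : cIcc a b = arc a ((b - a).val + 1) := by
  ext x
  rw [mem_cIcc, btw_iff_not_sbtw, mem_arc, Nat.lt_succ_iff, ← not_lt]
  refine not_congr ⟨fun hs => ?_, fun hlt => ?_⟩
  · exact (sbtw_iff_val_sub_lt.1 hs.cyclic_right).2
  · exact (sbtw_iff_val_sub_lt.2 ⟨h, hlt⟩).cyclic_left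

theorem cIoo_sub_one_eq_empty (a : ZMod n) : cIoo (a - 1) a = ∅ := by
  refine eq_empty_of_forall_notMem fun x hx => ?_
  obtain ⟨hne, hlt⟩ := sbtw_iff_val_sub_lt.1 hx
  have hpos := zmod_val_sub_pos hne
  have h1 : (1 : ZMod n).val ≤ 1 := zmod_val_one_le n
  rw [sub_sub_cancel] at hlt
  omega

theorem exists_mem_add_one_notMem (hS : S.Nonempty) (hS' : S ≠ univ) : ∃ a ∈ S, a + 1 ∉ S := by
  by_contra! h
  obtain ⟨a, ha⟩ := hS
  have hmem (k : ℕ) : a + k ∈ S := by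
    induction k with
    | zero => simpa using ha
    | succ k ih => simpa [add_assoc] using h _ ih
  refine hS' (eq_univ_of_forall fun x => ?_)
  simpa using hmem (x - a).val

theorem exists_mem_sub_one_notMem (hS : S.Nonempty) (hS' : S ≠ univ) : ∃ a ∈ S, a - 1 ∉ S := by
  obtain ⟨b, hb, hb'⟩ := exists_mem_add_one_notMem (nonempty_compl.2 hS') (compl_ne_univ.2 hS)
  exact ⟨b + 1, not_not.1 hb', by simpa using hb⟩

theorem isCircConvex_arc (a : ZMod n) (k : ℕ) : IsCircConvex (arc a k) := by
  have key {x y : ZMod n} (hy : y ∈ arc a k) (h : (x - a).val ≤ (y - a).val) :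
      cIoo x y ⊆ arc a k := by
    intro z hz
    have hxz := zmod_val_sub_add_val_sub a x z
    have hxy := zmod_val_sub_add_val_sub a x y
    have := (sbtw_iff_val_sub_lt.1 hz).2
    have := (z - a).val_lt
    have := (y - x).val_lt
    simp only [mem_arc] at hy ⊢
    omega
  intro x hx y hy
  exact (le_total (x - a).val (y - a).val).imp (key hy) (key hx)

theorem IsCircConvex.exists_eq_arc (hS : IsCircConvex S) : ∃ a k, S = arc a k := by
  rcases S.eq_empty_or_nonempty with rfl | hne
  · exact ⟨0, 0, by simp [arc]⟩
  by_cases huniv : S = univ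
  · exact ⟨0, n, by simp [arc, huniv, ZMod.val_lt]⟩
  obtain ⟨a, ha, ha'⟩ := exists_mem_sub_one_notMem hne huniv
  obtain ⟨b, hb, hmax⟩ := S.exists_max_image (fun x => (x - a).val) S.toFinite hne
  refine ⟨a, (b - a).val + 1, Subset.antisymm (fun x hx => Nat.lt_succ_of_le (hmax x hx)) ?_⟩
  intro x (hx : (x - a).val < (b - a).val + 1)
  rcases eq_or_ne a x with rfl | hax
  · exact ha
  rcases eq_or_ne x b with rfl | hxb
  · exact hb
  have hne : (x - a).val ≠ (b - a).val :=
    fun h => hxb (sub_left_injective (ZMod.val_injective n h))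
  have hs : sbtw a x b := sbtw_iff_val_sub_lt.2 ⟨hax, by omega⟩
  refine (hS ha hb).resolve_right (fun h => ha' (h ?_)) hs
  have hba : b ≠ a - 1 := ne_of_mem_of_not_mem hb ha'
  have hab : a - 1 ≠ a := (ne_of_mem_of_not_mem ha ha').symm
  refine (sbtw_or_sbtw_of_ne hba hab ?_).resolve_right fun h => ?_
  · rintro rfl
    exact sbtw_irrefl_left_right hs
  · exact (cIoo_sub_one_eq_empty a).subset h.cyclic_left

theorem isArc_iff_isCircConvex : IsArc n S ↔ IsCircConvex S := by
  rw [isArc_iff_exists_eq_arc]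
  refine ⟨?_, IsCircConvex.exists_eq_arc⟩
  rintro ⟨a, k, rfl⟩
  exact isCircConvex_arc a k

theorem nonempty_arc_inter_arc (hk : 0 < k) (hm : 0 < m) :
    (arc a k ∩ arc b m).Nonempty ↔ b ∈ arc a k ∨ a ∈ arc b m := by
  constructor
  · rintro ⟨x, hxa, hxb⟩
    have := zmod_val_sub_add_val_sub a b x
    have := zmod_val_sub_add_val_sub b a x
    have := zmod_val_sub_add_val_sub a b a
    have := (x - b).val_lt
    simp only [mem_arc, sub_self, ZMod.val_zero] at *
    omega
  · rintro (h | h)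
    exacts [⟨b, h, by simpa using hm⟩, ⟨a, by simpa using hk, h⟩]

end ZModArc

section RoundTight

variable {n : ℕ} [NeZero n]

/-- For a graph `G` on the points of the circle: the identity is a tight arc ordering of `N[G]`.
Arcs are expressed as circularly convex sets. -/
def HasTightNbhds (G : SimpleGraph (ZMod n)) : Prop :=
  (∀ i, IsCircConvex (ClosedNbhd G i)) ∧
    ∀ i j, ClosedNbhd G j ⊆ ClosedNbhd G i → ClosedNbhd G i ≠ univ →
      SharesStart n (ClosedNbhd G i) (ClosedNbhd G j) ∨
        SharesEnd n (ClosedNbhd G i) (ClosedNbhd G j)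

theorem IsRound.sharesStart_or_sharesEnd {G : SimpleGraph (ZMod n)} (hG : IsRound G) {i j : ZMod n}
    (hji : ClosedNbhd G j ⊆ ClosedNbhd G i) (hi : ClosedNbhd G i ≠ univ) :
    SharesStart n (ClosedNbhd G i) (ClosedNbhd G j) ∨
      SharesEnd n (ClosedNbhd G i) (ClosedNbhd G j) := by
  obtain ⟨a, ha, ha'⟩ := exists_mem_sub_one_notMem ⟨i, self_mem_closedNbhd⟩ hi
  obtain ⟨b, hb, hb'⟩ := exists_mem_add_one_notMem ⟨i, self_mem_closedNbhd⟩ hi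
  rcases hji self_mem_closedNbhd with rfl | hadj
  · exact .inl ⟨a, ha, ha', ha, ha'⟩
  rcases hG hadj with h | h
  · exact .inl ⟨a, ha, ha', hG.mem_closedNbhd_of_isClique (cIoo_sub_one_eq_empty a) ha' ha h,
      fun h => ha' (hji h)⟩
  · have hgap : cIoo b (b + 1) = ∅ := by
      rw [← cIoo_sub_one_eq_empty (b + 1), add_sub_cancel_right]
    have hrev : IsRound (α := (ZMod n)ᵒᵈ) G := fun u v huv => (hG huv).symm
    exact .inr ⟨b, hb, hb', hrev.mem_closedNbhd_of_isClique hgap hb' hb h, fun h => hb' (hji h)⟩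

theorem IsRound.hasTightNbhds {G : SimpleGraph (ZMod n)} (hG : IsRound G) : HasTightNbhds G :=
  ⟨hG.isCircConvex_closedNbhd, fun _ _ => hG.sharesStart_or_sharesEnd⟩

theorem isTightArcOrderingFam_iff_hasTightNbhds {V : Type*} {G : SimpleGraph V} {f : V ≃ ZMod n} :
    IsTightArcOrderingFam (fun v => ClosedNbhd G v) n f ↔ HasTightNbhds (G.comap f.symm) := by
  refine and_congr ?_ ?_
  · refine f.forall_congr fun v => ?_
    rw [image_closedNbhd, isArc_iff_isCircConvex]
  · refine f.forall_congr fun u => f.forall_congr fun v => ?_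
    rw [← image_closedNbhd, ← image_closedNbhd, image_subset_image_iff f.injective]
    exact imp_congr_right fun _ => imp_iff_right ⟨v, self_mem_closedNbhd⟩

end RoundTight

section RoundPCA

variable {n : ℕ}

/-- The largest length `t ≤ n` for which the arc of length `t` starting at `v` is a clique. -/
noncomputable def reach (G : SimpleGraph (ZMod n)) (v : ZMod n) : ℕ := by
  classical exact Nat.findGreatest (fun t => G.IsClique (arc v t)) n

variable {G : SimpleGraph (ZMod n)} {t : ℕ} {u v w : ZMod n}

theorem isClique_arc_reach (G : SimpleGraph (ZMod n)) (v : ZMod n) :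
    G.IsClique (arc v (reach G v)) := by
  classical
  exact Nat.findGreatest_spec (P := fun t => G.IsClique (arc v t)) n.zero_le (by simp [arc])

theorem reach_le : reach G v ≤ n := by
  classical exact Nat.findGreatest_le n

theorem le_reach (ht : t ≤ n) (h : G.IsClique (arc v t)) : t ≤ reach G v := by
  classical exact Nat.le_findGreatest ht h

variable [NeZero n]

theorem reach_pos : 0 < reach G v := by
  refine le_reach (NeZero.one_le) (SimpleGraph.IsClique.of_subsingleton fun x hx y hy => ?_)
  simp_all [sub_eq_zero]

theorem reach_le_add : reach G u ≤ (v - u).val + reach G v := by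
  rw [← Nat.sub_le_iff_le_add']
  refine le_reach ((Nat.sub_le _ _).trans reach_le) ((isClique_arc_reach G u).subset ?_)
  intro x hx
  have := zmod_val_sub_add_val_sub u v x
  simp only [mem_arc] at hx ⊢
  omega

theorem adj_of_lt_reach (hvw : v ≠ w) (h : (w - v).val < reach G v) : G.Adj v w :=
  isClique_arc_reach G v (by simp [reach_pos]) h hvw

theorem IsRound.adj_iff_lt_reach (hG : IsRound G) (hvw : v ≠ w) :
    G.Adj v w ↔ (w - v).val < reach G v ∨ (v - w).val < reach G w := by
  constructor
  · intro h
    refine (hG h).imp (fun h => ?_) fun h => ?_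
    · exact le_reach (w - v).val_lt (cIcc_eq_arc hvw ▸ h)
    · exact le_reach (v - w).val_lt (cIcc_eq_arc hvw.symm ▸ h)
  · rintro (h | h)
    exacts [adj_of_lt_reach hvw h, (adj_of_lt_reach hvw.symm h).symm]

theorem IsRound.isPCAGraph (hG : IsRound G) : IsPCAGraph G := by
  -- The arc of `v` ends just before `n * (v + reach v) + v`, so cliques `arc v (reach v)` with the
  -- same end point give arcs with different end points.
  let s (v : ZMod n) : ZMod (n * (n + 1)) := ((n + 1) * v.val : ℕ)
  have hs (v w : ZMod n) : (s w - s v).val = (n + 1) * (w - v).val :=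
    val_natCast_mul_sub_natCast_mul v w
  have hpos (v : ZMod n) : 0 < n * reach G v := Nat.mul_pos (NeZero.pos n) reach_pos
  let l (v : ZMod n) : Set (ZMod (n * (n + 1))) := arc (s v) (n * reach G v)
  have hmem (v w : ZMod n) : s w ∈ l v ↔ (w - v).val < reach G v := by
    have := (w - v).val_lt
    rw [mem_arc, hs]
    constructor <;> intro h <;> nlinarith
  have hincomp (u v : ZMod n) (huv : u ≠ v) : ¬ l u ⊆ l v := by
    intro hsub
    have hlt : n * reach G v < n * (n + 1) :=
      Nat.mul_lt_mul_of_pos_left (Nat.lt_succ_of_le reach_le) (NeZero.pos n)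
    have hle := val_sub_add_le_of_arc_subset_arc (hpos u) hlt hsub
    rw [hs] at hle
    have := reach_le_add (G := G) (u := v) (v := u)
    have := zmod_val_sub_pos huv.symm
    nlinarith
  refine ⟨n * (n + 1), NeZero.pos _, l, fun u v huv => ?_, fun v => ⟨?_, ?_⟩, hincomp,
    fun u v huv => ?_⟩
  · exact of_not_not fun hne => hincomp u v hne huv.subset
  · exact ⟨s v, (hmem v v).2 (by simp [reach_pos])⟩
  · exact isArc_iff_exists_eq_arc.2 ⟨s v, n * reach G v, rfl⟩
  · rw [nonempty_arc_inter_arc (hpos u) (hpos v), hG.adj_iff_lt_reach huv]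
    exact (or_congr (hmem u v) (hmem v u)).symm

theorem IsPCAGraph.comap {V W : Type*} {G : SimpleGraph W} (hG : IsPCAGraph G) {g : V → W}
    (hg : Function.Injective g) : IsPCAGraph (G.comap g) := by
  obtain ⟨n, hn, l, hl, harc, hincomp, hadj⟩ := hG
  exact ⟨n, hn, l ∘ g, hl.comp hg, fun v => harc (g v), fun u v h => hincomp _ _ (hg.ne h),
    fun u v h => hadj _ _ (hg.ne h)⟩

theorem IsPCAGraph.of_comap_symm {V W : Type*} {G : SimpleGraph V} (f : V ≃ W)
    (hG : IsPCAGraph (G.comap f.symm)) : IsPCAGraph G := by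
  simpa [SimpleGraph.comap_comap] using hG.comap f.injective

end RoundPCA

section PCARound

theorem exists_equiv_zmod_monotone {V β : Type*} [Fintype V] [Nonempty V] [LinearOrder β]
    (k : V → β) :
    ∃ f : V ≃ ZMod (Fintype.card V), ∀ ⦃u v⦄, (f u).val ≤ (f v).val → k u ≤ k v := by
  let e := Fintype.equivFin V
  let σ := Tuple.sort (k ∘ e.symm)
  have hval {n : ℕ} [NeZero n] (i : Fin n) : (ZMod.finEquiv n i).val = i := by
    cases n with
    | zero => exact i.elim0
    | succ n => rfl
  refine ⟨(e.trans σ.symm).trans (ZMod.finEquiv (Fintype.card V)).toEquiv, fun u v huv => ?_⟩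
  have hle : σ.symm (e u) ≤ σ.symm (e v) := by simpa [hval] using huv
  simpa [σ] using Tuple.monotone_sort (k ∘ e.symm) hle

theorem sbtw_of_strictMono_val {m n : ℕ} [NeZero m] [NeZero n] {g : ZMod m → ZMod n}
    (hg : ∀ ⦃x y⦄, x.val < y.val → (g x).val < (g y).val) {a b c : ZMod m} (h : sbtw a b c) :
    sbtw (g a) (g b) (g c) := by
  rw [sbtw_iff_val_lt] at h ⊢
  exact h.imp (.imp (@hg _ _) (@hg _ _))
    (.imp (.imp (@hg _ _) (@hg _ _)) (.imp (@hg _ _) (@hg _ _)))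

variable {V : Type*} {G : SimpleGraph V} {n : ℕ} {s : V → ZMod n} {k : V → ℕ} {u v : V}

theorem injective_of_not_arc_subset_arc
    (hs : ∀ u v, u ≠ v → ¬ arc (s u) (k u) ⊆ arc (s v) (k v)) : Function.Injective s := by
  intro u v huv
  by_contra hne
  rcases le_total (k u) (k v) with h | h
  · exact hs u v hne (huv ▸ fun x (hx : _ < _) => hx.trans_le h)
  · exact hs v u (Ne.symm hne) (huv ▸ fun x (hx : _ < _) => hx.trans_le h)

variable [NeZero n]

theorem isClique_preimage_cIcc (hs : ∀ u v, u ≠ v → ¬ arc (s u) (k u) ⊆ arc (s v) (k v))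
    (hadj : ∀ u v, u ≠ v → (arc (s u) (k u) ∩ arc (s v) (k v)).Nonempty → G.Adj u v)
    (huv : u ≠ v) (h : s v ∈ arc (s u) (k u)) : G.IsClique (s ⁻¹' cIcc (s u) (s v)) := by
  have hmem : ∀ z ∈ s ⁻¹' cIcc (s u) (s v), s v ∈ arc (s z) (k z) := by
    intro z hz
    rw [mem_preimage, cIcc_eq_arc ((injective_of_not_arc_subset_arc hs).ne huv)] at hz
    by_contra hvz
    -- The arc of `z` starts inside the arc of `u` and ends before `s v`.
    refine hs z u (fun h => ?_) fun x hx => ?_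
    · rw [h] at hvz
      contradiction
    · have := (s v - s z).val_lt
      have := zmod_val_sub_add_val_sub (s u) (s z) (s v)
      have := zmod_val_sub_add_val_sub (s u) (s z) x
      simp only [mem_arc] at *
      omega
  exact fun x hx y hy hxy => hadj x y hxy ⟨s v, hmem x hx, hmem y hy⟩

theorem isRound_of_strictMono_val {m : ℕ} [NeZero m] {G : SimpleGraph (ZMod m)}
    {s : ZMod m → ZMod n} {k : ZMod m → ℕ} (hpos : ∀ x, 0 < k x)
    (hs : ∀ x y, x ≠ y → ¬ arc (s x) (k x) ⊆ arc (s y) (k y))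
    (hadj : ∀ x y, x ≠ y → (G.Adj x y ↔ (arc (s x) (k x) ∩ arc (s y) (k y)).Nonempty))
    (hmono : ∀ ⦃x y⦄, x.val < y.val → (s x).val < (s y).val) : IsRound G := by
  have hclique {x y : ZMod m} (hxy : x ≠ y) (h : s y ∈ arc (s x) (k x)) :
      G.IsClique (cIcc x y) := by
    refine (isClique_preimage_cIcc hs (fun u v h => (hadj u v h).2) hxy h).subset fun z hz => ?_
    rcases (mem_cIcc_iff_of_ne hxy).1 hz with rfl | rfl | hz
    exacts [left_mem_cIcc _ _, right_mem_cIcc _ _, (sbtw_of_strictMono_val hmono hz).btw]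
  intro x y hxy
  have hinter := (hadj x y hxy.ne).1 hxy
  exact ((nonempty_arc_inter_arc (hpos x) (hpos y)).1 hinter).imp (hclique hxy.ne)
    (hclique hxy.ne')

theorem IsPCAGraph.exists_isRound [Fintype V] [Nonempty V] (hG : IsPCAGraph G) :
    ∃ f : V ≃ ZMod (Fintype.card V), IsRound (G.comap f.symm) := by
  obtain ⟨n, hn, l, -, harc, hincomp, hadj⟩ := hG
  have : NeZero n := ⟨hn.ne'⟩
  choose s k hl using fun v => isArc_iff_exists_eq_arc.1 (harc v).2
  simp only [hl] at harc hincomp hadj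
  obtain ⟨f, hf⟩ := exists_equiv_zmod_monotone fun v => (s v).val
  refine ⟨f, isRound_of_strictMono_val (s := s ∘ f.symm) (k := k ∘ f.symm) (fun x => ?_)
    (fun x y h => hincomp _ _ (f.symm.injective.ne h))
    (fun x y h => hadj _ _ (f.symm.injective.ne h)) fun x y hxy => ?_⟩
  · obtain ⟨p, hp⟩ := (harc (f.symm x)).1
    exact (Nat.zero_le _).trans_lt hp
  · have hle : (s (f.symm x)).val ≤ (s (f.symm y)).val := hf (by simpa using hxy.le)
    have hs : Function.Injective s := injective_of_not_arc_subset_arc hincomp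
    refine hle.lt_of_ne fun h => hxy.ne ?_
    rw [f.symm.injective (hs (ZMod.val_injective n h))]

end PCARound

section KeyedRound

variable {V : Type*} {G : SimpleGraph V}

theorem isClique_of_isClique_compl {P S : Set V} (hP : G.IsClique P) (hPc : G.IsClique Pᶜ)
    (h : ∀ x ∈ S ∩ P, ∀ z ∈ S \ P, G.Adj x z) : G.IsClique S := by
  intro x hx z hz hne
  by_cases hxP : x ∈ P <;> by_cases hzP : z ∈ P
  exacts [hP hxP hzP hne, h x ⟨hx, hxP⟩ z ⟨hz, hzP⟩, (h z ⟨hz, hzP⟩ x ⟨hx, hxP⟩).symm,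
    hPc hxP hzP hne]

variable [Fintype V] [Nonempty V]

theorem exists_isRound_of_key {β : Type*} [LinearOrder β] (k : V → β)
    (hk : ∀ ⦃u v⦄, k u ≤ k v → G.Adj u v →
      G.IsClique (k ⁻¹' Icc (k u) (k v)) ∨ G.IsClique (k ⁻¹' (Ici (k v) ∪ Iic (k u)))) :
    ∃ f : V ≃ ZMod (Fintype.card V), IsRound (G.comap f.symm) := by
  obtain ⟨f, hf⟩ := exists_equiv_zmod_monotone k
  have hmono {x y : ZMod (Fintype.card V)} (h : x.val ≤ y.val) : k (f.symm x) ≤ k (f.symm y) :=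
    hf (by simpa using h)
  have key {x y : ZMod (Fintype.card V)} (hlt : x.val < y.val) (hxy : (G.comap f.symm).Adj x y) :
      (G.comap f.symm).IsClique (cIcc x y) ∨ (G.comap f.symm).IsClique (cIcc y x) := by
    refine (hk (hmono hlt.le) hxy).imp (fun h z hz w hw hzw => ?_) fun h z hz w hw hzw => ?_
    · have hmem {z} (hz : z ∈ cIcc x y) : f.symm z ∈ k ⁻¹' Icc (k (f.symm x)) (k (f.symm y)) := by
        rw [mem_cIcc, btw_iff_not_sbtw, sbtw_iff_val_lt] at hz
        exact ⟨hmono (by omega), hmono (by omega)⟩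
      exact h (hmem hz) (hmem hw) (f.symm.injective.ne hzw)
    · have hmem {z} (hz : z ∈ cIcc y x) :
          f.symm z ∈ k ⁻¹' (Ici (k (f.symm y)) ∪ Iic (k (f.symm x))) := by
        rw [mem_cIcc, btw_iff_not_sbtw, sbtw_iff_val_lt] at hz
        exact (show y.val ≤ z.val ∨ z.val ≤ x.val by omega).imp (@hmono _ _) (@hmono _ _)
      exact h (hmem hz) (hmem hw) (f.symm.injective.ne hzw)
  refine ⟨f, fun x y hxy => ?_⟩
  rcases lt_or_gt_of_ne ((ZMod.val_injective _).ne hxy.ne) with h | h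
  · exact key h hxy
  · exact (key h hxy.symm).symm

theorem exists_isRound_of_adj_iff {P : Set V} (hP : G.IsClique P) (hPc : G.IsClique Pᶜ)
    {l r p : V → ℕ} (hadj : ∀ x ∈ P, ∀ z ∉ P, G.Adj x z ↔ p z < l x ∨ r x < p z)
    (hnest : ∀ x ∈ P, ∀ y ∈ P, l x < l y → r x ≤ r y) :
    ∃ f : V ≃ ZMod (Fintype.card V), IsRound (G.comap f.symm) := by
  classical
  -- Within `P`, sorting by `l + r` sorts by `l` and by `r` at the same time.
  let k (v : V) : ℕ ⊕ₗ ℕ := if v ∈ P then Sum.inlₗ (l v + r v) else Sum.inrₗ (p v)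
  have hk {v : V} (hv : v ∈ P) : k v = Sum.inlₗ (l v + r v) := if_pos hv
  have hk' {v : V} (hv : v ∉ P) : k v = Sum.inrₗ (p v) := if_neg hv
  have hP_of_le {v w : V} (hw : w ∈ P) (h : k v ≤ k w) : v ∈ P := by
    by_contra hv
    rw [hk hw, hk' hv] at h
    exact Sum.Lex.not_inr_le_inl h
  have hlr {x y : V} (hx : x ∈ P) (hy : y ∈ P) (h : k x ≤ k y) : l x ≤ l y ∧ r x ≤ r y := by
    rw [hk hx, hk hy, Sum.Lex.inl_le_inl_iff] at h
    have := hnest x hx y hy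
    have := hnest y hy x hx
    omega
  have hp {z w : V} (hz : z ∉ P) (hw : w ∉ P) (h : k z ≤ k w) : p z ≤ p w := by
    rwa [hk' hz, hk' hw, Sum.Lex.inr_le_inr_iff] at h
  refine exists_isRound_of_key k fun u v _ h => ?_
  by_cases hv : v ∈ P
  · exact .inl (hP.subset fun w hw => hP_of_le hv hw.2)
  by_cases hu : u ∈ P
  · refine ((hadj u hu v hv).1 h).imp (fun hlt => ?_) fun hlt => ?_
    · refine isClique_of_isClique_compl hP hPc fun x ⟨hx, hxP⟩ z ⟨hz, hzP⟩ => ?_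
      refine (hadj x hxP z hzP).2 (.inl ?_)
      exact ((hp hzP hv hz.2).trans_lt hlt).trans_le (hlr hu hxP hx.1).1
    · refine isClique_of_isClique_compl hP hPc fun x ⟨hx, hxP⟩ z ⟨hz, hzP⟩ => ?_
      refine (hadj x hxP z hzP).2 (.inr ?_)
      have hxu : k x ≤ k u := hx.resolve_left fun h => hv (hP_of_le hxP h)
      have hvz : k v ≤ k z := hz.resolve_right fun h => hzP (hP_of_le hu h)
      exact ((hlr hxP hu hxu).2.trans_lt hlt).trans_le (hp hv hzP hvz)
  · exact .inl (hPc.subset fun w hw hwP => hu (hP_of_le hwP hw.1))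

end KeyedRound

section TightPCA

variable {n : ℕ} [NeZero n] {S : Set (ZMod n)} {p : ZMod n}

theorem IsCircConvex.mem_of_val_sub_mem_Icc (hS : IsCircConvex S) (hp : p ∉ S) {x y z : ZMod n}
    (hx : x ∈ S) (hz : z ∈ S) (hxy : (x - p).val ≤ (y - p).val) (hyz : (y - p).val ≤ (z - p).val) :
    y ∈ S := by
  rcases eq_or_ne x y with rfl | hne
  · exact hx
  rcases eq_or_ne y z with rfl | hne'
  · exact hz
  have hpxy : sbtw p x y := by
    refine sbtw_iff_val_sub_lt.2 ⟨(ne_of_mem_of_not_mem hx hp).symm, hxy.lt_of_ne fun h => hne ?_⟩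
    exact sub_left_injective (ZMod.val_injective n h)
  have hpyz : sbtw p y z := by
    refine sbtw_iff_val_sub_lt.2 ⟨?_, hyz.lt_of_ne fun h => hne' ?_⟩
    · rintro rfl
      exact sbtw_irrefl_left_right hpxy
    · exact sub_left_injective (ZMod.val_injective n h)
  exact (hS hx hz).resolve_right
    (fun h => hp (h (sbtw_of_sbtw_of_sbtw hpyz.cyclic_left hpxy)))
    (sbtw_of_sbtw_of_sbtw hpxy hpyz.cyclic_left)

theorem IsCircConvex.exists_mem_iff_val_sub_mem_Icc (hS : IsCircConvex S) (hp : p ∉ S) :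
    ∃ l r, 0 < l ∧ r < n ∧ (S = ∅ → l = 1) ∧ ∀ z, z ∈ S ↔ (z - p).val ∈ Icc l r := by
  rcases S.eq_empty_or_nonempty with rfl | hne
  -- With `l = 1` the empty interval never starts after another one.
  · exact ⟨1, 0, one_pos, NeZero.pos n, fun _ => rfl, by simp⟩
  obtain ⟨x, hx, hmin⟩ := S.exists_min_image (fun z => (z - p).val) S.toFinite hne
  obtain ⟨y, hy, hmax⟩ := S.exists_max_image (fun z => (z - p).val) S.toFinite hne
  refine ⟨(x - p).val, (y - p).val, zmod_val_sub_pos (ne_of_mem_of_not_mem hx hp).symm,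
    (y - p).val_lt, fun h => absurd h hne.ne_empty, fun z => ⟨fun hz => ⟨hmin z hz, hmax z hz⟩,
    fun hz => hS.mem_of_val_sub_mem_Icc hp hx hy hz.1 hz.2⟩⟩

theorem HasTightNbhds.right_le_right_of_left_lt_left {G : SimpleGraph (ZMod n)}
    (hG : HasTightNbhds G) {i j : ZMod n} {l r l' r' : ℕ}
    (hi : ∀ z, z ∈ (ClosedNbhd G i)ᶜ ↔ (z - p).val ∈ Icc l r)
    (hj : ∀ z, z ∈ (ClosedNbhd G j)ᶜ ↔ (z - p).val ∈ Icc l' r') (hr : r < n)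
    (huniv : ClosedNbhd G j ≠ univ) (hl : l < l') : r ≤ r' := by
  by_contra! hrr
  have hij : ClosedNbhd G i ⊆ ClosedNbhd G j := compl_subset_compl.1 fun z hz =>
    (hi z).2 ⟨hl.le.trans ((hj z).1 hz).1, ((hj z).1 hz).2.trans hrr.le⟩
  have h1 := zmod_val_one_le n
  rcases hG.2 j i hij huniv with ⟨a, -, ha, hai, -⟩ | ⟨a, -, ha, hai, -⟩
  · have hstep := zmod_val_sub_add_val_sub p (a - 1) a
    obtain ⟨hla, har⟩ := (hj _).1 ha
    rw [sub_sub_cancel] at hstep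
    exact (hi a).2 ⟨by omega, by omega⟩ hai
  · have hstep := zmod_val_sub_add_val_sub p a (a + 1)
    obtain ⟨hla, har⟩ := (hj _).1 ha
    have := (a - p).val_lt
    rw [add_sub_cancel_left] at hstep
    exact (hi a).2 ⟨by omega, by omega⟩ hai

theorem HasTightNbhds.isPCAGraph_of_isCobipartite {G : SimpleGraph (ZMod n)}
    (hG : HasTightNbhds G) (h : IsCobipartite G) : IsPCAGraph G := by
  obtain ⟨P, hP, hPc⟩ := h
  wlog hne : P.Nonempty generalizing P
  · refine this Pᶜ hPc (by rwa [compl_compl]) ?_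
    rw [not_nonempty_iff_eq_empty.1 hne, compl_empty]
    exact univ_nonempty
  obtain ⟨p, hp⟩ := hne
  have hpi {i : ZMod n} (hi : i ∈ P) : p ∉ (ClosedNbhd G i)ᶜ :=
    not_not_intro (isClique_iff_mem_closedNbhd.1 hP hp hi)
  have hgap (i) (hi : i ∈ P) := (hG.1 i).compl.exists_mem_iff_val_sub_mem_Icc (hpi hi)
  choose! l r hl hr hempty hmem using hgap
  have hadj (x) (hx : x ∈ P) (z) (hz : z ∉ P) :
      G.Adj x z ↔ (z - p).val < l x ∨ r x < (z - p).val := by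
    rw [G.adj_comm, adj_iff_mem_closedNbhd (ne_of_mem_of_not_mem hx hz).symm,
      ← notMem_compl_iff, hmem x hx, mem_Icc, not_and_or, not_le, not_le]
  obtain ⟨f, hf⟩ := exists_isRound_of_adj_iff hP hPc hadj fun x hx y hy hxy => by
    refine hG.right_le_right_of_left_lt_left (hmem x hx) (hmem y hy) (hr x hx) (fun huniv => ?_) hxy
    have := hl x hx
    have := hempty y hy (by rw [huniv, compl_univ])
    omega
  exact hf.isPCAGraph.of_comap_symm f

theorem HasTightNbhds.isPCAGraph {G : SimpleGraph (ZMod n)} (hG : HasTightNbhds G) :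
    IsPCAGraph G := by
  by_cases h : IsCobipartite G
  · exact hG.isPCAGraph_of_isCobipartite h
  · exact (isRound_of_not_isCobipartite hG.1 h).isPCAGraph

end TightPCA

/-- A finite simple graph `G` is a proper circular-arc graph iff
its closed neighborhood hypergraph `N[G]` admits a tight arc ordering. -/
theorem stmt1 {V : Type*} [Fintype V] [Nonempty V] (G : SimpleGraph V) :
    IsPCAGraph G ↔ ∃ f : V ≃ ZMod (Fintype.card V),
      IsTightArcOrderingFam (fun v => ClosedNbhd G v) (Fintype.card V) f := by
  constructor
  · intro h
    obtain ⟨f, hf⟩ := h.exists_isRound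
    exact ⟨f, isTightArcOrderingFam_iff_hasTightNbhds.2 hf.hasTightNbhds⟩
  · rintro ⟨f, hf⟩
    exact (isTightArcOrderingFam_iff_hasTightNbhds.1 hf).isPCAGraph.of_comap_symm f
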